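/- arXiv:2110.15050 — 2 statements merged into one kernel-verified Lean document; each statement's English description precedes it below -/
import Mathlib

section
/- Let d ≥ 2 be an integer, 0<p<1 with p ≠ 1/d, and let r_{n,k} be the root-cluster weights for random increasing d-ary trees (φ(δ)=d!/(d-δ)! for 0≤δ≤d, φ(δ)=0 for δ>d). Then for all real x with |x| < 1/(d-1), Σ_{n≥1} (Σ_{j≥1} j·r_{n,j}) x^n/n! = (1/(pd-1))·((1-(d-1)x)^{-pd/(d-1)} - (1-(d-1)x)^{-1/(d-1)}). -/
open Finset Filter Asymptotics

/-- The root-cluster weight recursion. -/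
noncomputable def clusterRec (p : ℝ) (φ : ℕ → ℝ) (r : ℕ → ℕ → ℝ) (b : ℕ → ℝ) : Prop :=
  (∀ m, b m = ∑ k ∈ Finset.Icc 1 m, r m k) ∧
  ∀ n k : ℕ, 1 ≤ n → 1 ≤ k →
    r n k =
      ∑ δ ∈ Finset.range n, ∑ s ∈ (Finset.range (δ + 1)).attach,
        (δ.choose s.1 : ℝ) * (φ δ / (δ.factorial : ℝ)) *
          ∑ f ∈ (Finset.Nat.antidiagonalTuple δ (n - 1)).filter (fun f => ∀ i, 1 ≤ f i),
            (((n - 1).factorial : ℝ) / ∏ i, ((f i).factorial : ℝ)) *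
              ∑ g ∈ (Finset.Nat.antidiagonalTuple s.1 (k - 1)).filter (fun g => ∀ i, 1 ≤ g i),
                p ^ s.1 * (1 - p) ^ (δ - s.1) *
                  (∏ i : Fin s.1,
                    r (f (Fin.castLE (Nat.lt_succ_iff.mp (Finset.mem_range.mp s.2)) i)) (g i)) *
                  ∏ j ∈ Finset.univ.filter (fun j : Fin δ => s.1 ≤ (j : ℕ)), b (f j)

/-- Partial Bell polynomials. -/
noncomputable def bellPartial (k j : ℕ) (x : ℕ → ℝ) : ℝ :=
  ∑ m ∈ (Fintype.piFinset (fun _ : Fin (k - j + 1) => Finset.range (k + 1))).filter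
      (fun m : Fin (k - j + 1) → ℕ => (∑ i : Fin (k - j + 1), ((i : ℕ) + 1) * m i) = k ∧ (∑ i, m i) = j),
    (k.factorial : ℝ) *
      ∏ i : Fin (k - j + 1), x ((i : ℕ) + 1) ^ m i /
        (((m i).factorial : ℝ) * (((i : ℕ) + 1).factorial : ℝ) ^ m i)

/-
Let `R(z, v) = ∑ r_{n,k} vᵏ zⁿ / n!`, `B(z) = R(z, 1)` and `Φ(t) = ∑ φ(δ) t^δ / δ!`. The recursion
says `∂R/∂z = v Φ(p R + (1 - p) B)`. The variable `v` may be evaluated in any commutative real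
algebra: `v = 1` gives `B' = Φ(B)`, and `v = 1 + ε` in the dual numbers, where `R = B + ε M` with
`M` the first-moment series, gives `M' = B' + p Φ'(B) M`. When `Φ(t) = (1 + t)^a`, the quotient
`(1 + B) / B'` has constant derivative `1 - a`, so `(1 - (a - 1) z) B' = 1 + B` and
`(1 - (a - 1) z) Φ'(B) = a`. Hence `1 + B` and `(p a - 1) M + (1 + B)` both solve
`(1 - (a - 1) z) U' = λ U` with `U(0) = 1`, for `λ = 1` and `λ = p a` respectively, and the solution
of such an equation is the binomial series of `(1 - (a - 1) z) ^ (-λ / (a - 1))`.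
-/

section Tuples

@[to_additive]
lemma prod_castLE_mul_prod_filter_le {M : Type*} [CommMonoid M] {s δ : ℕ} (h : s ≤ δ)
    (F : Fin δ → M) :
    (∏ i : Fin s, F (Fin.castLE h i)) * ∏ j ∈ univ.filter fun j : Fin δ => s ≤ (j : ℕ), F j =
      ∏ j, F j := by
  have hmap : univ.map (Fin.castLEEmb h) = univ.filter fun j : Fin δ => (j : ℕ) < s := by
    ext j
    simp only [Finset.mem_map, mem_univ, true_and, mem_filter]
    exact ⟨by rintro ⟨i, rfl⟩; exact i.isLt, fun hj => ⟨⟨j, hj⟩, rfl⟩⟩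
  rw [← prod_filter_mul_prod_filter_not univ (fun j : Fin δ => (j : ℕ) < s), ← hmap, prod_map]
  simp only [Fin.castLEEmb_apply, not_lt]

lemma sum_range_sum_antidiagonalTuple_prod {A : Type*} [CommSemiring A] {s n : ℕ} {f : Fin s → ℕ}
    (hf : ∑ i, f i ≤ n) (w : Fin s → ℕ → A) (hw : ∀ i k, f i < k → w i k = 0) :
    ∑ j ∈ range (n + 1), ∑ g ∈ Finset.Nat.antidiagonalTuple s j with ∀ i, 1 ≤ g i,
      ∏ i, w i (g i) = ∏ i, ∑ k ∈ Icc 1 (f i), w i k := by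
  have hmaps : ∀ g ∈ Fintype.piFinset fun i => Icc 1 (f i), ∑ i, g i ∈ range (n + 1) := by
    intro g hg
    simp only [Fintype.mem_piFinset, mem_Icc] at hg
    exact mem_range_succ_iff.2 ((sum_le_sum fun i _ => (hg i).2).trans hf)
  rw [prod_univ_sum, ← sum_fiberwise_of_maps_to hmaps]
  refine sum_congr rfl fun j _ => (sum_subset ?_ ?_).symm
  · intro g hg
    simp only [mem_filter, Fintype.mem_piFinset, mem_Icc, Finset.Nat.mem_antidiagonalTuple]
      at hg ⊢
    exact ⟨hg.2, fun i => (hg.1 i).1⟩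
  · intro g hg hgf
    simp only [mem_filter, Fintype.mem_piFinset, mem_Icc, Finset.Nat.mem_antidiagonalTuple]
      at hg hgf
    obtain ⟨i, hi⟩ : ∃ i, f i < g i := by
      by_contra! hle
      exact hgf ⟨fun i => ⟨hg.2 i, hle i⟩, hg.1⟩
    exact prod_eq_zero (mem_univ i) (hw i _ hi)

end Tuples

section FormalSeries

open PowerSeries

lemma coeff_prod_eq_sum_antidiagonalTuple {A : Type*} [CommSemiring A] {δ : ℕ} (n : ℕ)
    (F : Fin δ → A⟦X⟧) :
    coeff n (∏ i, F i) =
      ∑ f ∈ Finset.Nat.antidiagonalTuple δ n, ∏ i, coeff (f i) (F i) := by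
  rw [coeff_prod]
  refine sum_equiv Finsupp.equivFunOnFinite (fun l => ?_) fun l _ => rfl
  simp [mem_finsuppAntidiag, Finset.Nat.mem_antidiagonalTuple]

lemma coeff_pow_mul_pow_eq_sum_antidiagonalTuple {A : Type*} [CommSemiring A] {U V : A⟦X⟧}
    (hU : constantCoeff U = 0) (hV : constantCoeff V = 0) {s δ : ℕ} (h : s ≤ δ) (n : ℕ) :
    coeff n (U ^ s * V ^ (δ - s)) =
      ∑ f ∈ Finset.Nat.antidiagonalTuple δ n with ∀ i, 1 ≤ f i,
        (∏ i : Fin s, coeff (f (Fin.castLE h i)) U) *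
          ∏ j ∈ univ.filter fun j : Fin δ => s ≤ (j : ℕ), coeff (f j) V := by
  let F : Fin δ → A⟦X⟧ := fun i => if (i : ℕ) < s then U else V
  have hFV : ∀ j ∈ univ.filter fun j : Fin δ => s ≤ (j : ℕ), F j = V := fun j hj =>
    if_neg (not_lt.2 (mem_filter.1 hj).2)
  have hsplit (ψ : Fin δ → A⟦X⟧ → A) : ∏ i, ψ i (F i) =
      (∏ i : Fin s, ψ (Fin.castLE h i) U) *
        ∏ j ∈ univ.filter fun j : Fin δ => s ≤ (j : ℕ), ψ j V := by
    rw [← prod_castLE_mul_prod_filter_le h]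
    congr 1
    · simp [F]
    · exact prod_congr rfl fun j hj => by rw [hFV j hj]
  have hprod : U ^ s * V ^ (δ - s) = ∏ i, F i := by
    have hcard : #(univ.filter fun j : Fin δ => s ≤ (j : ℕ)) = δ - s := by
      have := sum_castLE_add_sum_filter_le h fun _ => 1
      simp only [sum_const, card_univ, Fintype.card_fin, smul_eq_mul, mul_one] at this
      omega
    rw [← prod_castLE_mul_prod_filter_le h]
    congr 1
    · simp [F]
    · rw [prod_congr rfl hFV, prod_const, hcard]
  rw [hprod, coeff_prod_eq_sum_antidiagonalTuple, sum_filter]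
  refine sum_congr rfl fun f _ => ?_
  split_ifs with hf
  · exact hsplit fun i => coeff (f i)
  · push Not at hf
    obtain ⟨i, hi⟩ := hf
    refine prod_eq_zero (mem_univ i) ?_
    rw [Nat.lt_one_iff.1 hi, coeff_zero_eq_constantCoeff_apply]
    simp only [F]
    split_ifs <;> assumption

lemma constantCoeff_powerSeries_map {R S : Type*} [CommSemiring R] [CommSemiring S] (g : R →+* S)
    (f : R⟦X⟧) : constantCoeff (PowerSeries.map g f) = g (constantCoeff f) :=
  MvPowerSeries.constantCoeff_map g f

lemma derivative_powerSeries_map {R S : Type*} [CommSemiring R] [CommSemiring S] (g : R →+* S)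
    (f : R⟦X⟧) : d⁄dX S (PowerSeries.map g f) = PowerSeries.map g (d⁄dX R f) := by
  ext n
  simp [coeff_derivative]

variable {R A : Type*} [CommRing R] [CommRing A] [Algebra R A]

lemma X_pow_dvd_subst_sub_aeval_trunc {a : A⟦X⟧} (ha : constantCoeff a = 0) (f : R⟦X⟧) (n : ℕ) :
    X ^ n ∣ f.subst a - Polynomial.aeval a (trunc n f) := by
  have hs : HasSubst a := .of_constantCoeff_zero' ha
  conv_rhs => rw [eq_X_pow_mul_shift_add_trunc n f]
  rw [subst_add hs, subst_mul hs, subst_pow hs, subst_X hs, subst_coe hs]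
  simpa using Dvd.dvd.mul_right (pow_dvd_pow_of_dvd (X_dvd_iff.2 ha) n) _

lemma eq_of_forall_X_pow_dvd_sub {F G : A⟦X⟧} (h : ∀ n, X ^ n ∣ F - G) : F = G := by
  ext n
  exact sub_eq_zero.1 (by simpa using X_pow_dvd_iff.1 (h (n + 1)) n n.lt_succ_self)

lemma coeff_subst_eq_sum_range {a : A⟦X⟧} (ha : constantCoeff a = 0) (f : R⟦X⟧) (n : ℕ) :
    coeff n (f.subst a) = ∑ δ ∈ range (n + 1), coeff δ f • coeff n (a ^ δ) := by
  have h := X_pow_dvd_iff.1 (X_pow_dvd_subst_sub_aeval_trunc ha f (n + 1)) n n.lt_succ_self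
  rw [map_sub, sub_eq_zero] at h
  rw [h, Polynomial.aeval_eq_sum_range' (natDegree_trunc_lt f n), map_sum]
  refine sum_congr rfl fun δ hδ => ?_
  rw [coeff_trunc, if_pos (mem_range.1 hδ)]
  rfl

lemma map_algebraMap_smul (c : R) (f : R⟦X⟧) :
    PowerSeries.map (algebraMap R A) (c • f) = c • PowerSeries.map (algebraMap R A) f := by
  ext n
  rw [coeff_map, map_smul, smul_eq_mul, map_mul, ← Algebra.smul_def]
  rfl

lemma map_algebraMap_subst {a : R⟦X⟧} (ha : constantCoeff a = 0) (f : R⟦X⟧) :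
    PowerSeries.map (algebraMap R A) (f.subst a) =
      f.subst (PowerSeries.map (algebraMap R A) a) := by
  ext n
  rw [coeff_map, coeff_subst_eq_sum_range ha,
    coeff_subst_eq_sum_range (a := PowerSeries.map (algebraMap R A) a) (by
      rw [constantCoeff_powerSeries_map, ha, map_zero])]
  simp only [map_sum, ← map_pow, coeff_map, Algebra.smul_def, map_mul]
  rfl

lemma subst_add_of_mul_self_eq_zero {a e : A⟦X⟧} (ha : constantCoeff a = 0)
    (he : constantCoeff e = 0) (hee : e * e = 0) (f : R⟦X⟧) :
    f.subst (a + e) = f.subst a + (d⁄dX R f).subst a * e := by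
  refine eq_of_forall_X_pow_dvd_sub fun n => ?_
  have hn : X ^ n ∣ (X : A⟦X⟧) ^ (n + 1) := pow_dvd_pow _ n.le_succ
  have htaylor := Polynomial.aeval_add_of_sq_eq_zero (trunc (n + 1) f) a e (by rw [sq, hee])
  rw [← trunc_derivative] at htaylor
  have h₁ := hn.trans (X_pow_dvd_subst_sub_aeval_trunc (a := a + e) (by simp [ha, he]) f (n + 1))
  have h₂ := hn.trans (X_pow_dvd_subst_sub_aeval_trunc ha f (n + 1))
  have h₃ := X_pow_dvd_subst_sub_aeval_trunc ha (d⁄dX R f) n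
  rw [htaylor] at h₁
  convert (h₁.sub h₂).sub (h₃.mul_right e) using 1
  ring

end FormalSeries

section ExponentialGeneratingFunctions

open PowerSeries

variable {A : Type*} [CommRing A] [Algebra ℝ A]

/-- The exponential generating function `∑ uₙ Xⁿ / n!` of a sequence in a real algebra. -/
noncomputable def egf (u : ℕ → A) : A⟦X⟧ :=
  PowerSeries.mk fun n => (n.factorial : ℝ)⁻¹ • u n

@[simp]
lemma coeff_egf (u : ℕ → A) (n : ℕ) : coeff n (egf u) = (n.factorial : ℝ)⁻¹ • u n :=
  coeff_mk _ _

@[simp]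
lemma constantCoeff_egf (u : ℕ → A) : constantCoeff (egf u) = u 0 := by
  rw [← coeff_zero_eq_constantCoeff_apply, coeff_egf]
  simp

lemma derivative_egf (u : ℕ → A) : d⁄dX A (egf u) = egf fun n => u (n + 1) := by
  ext n
  have hn : ((n + 1 : ℕ) : ℝ) * ((n + 1).factorial : ℝ)⁻¹ = (n.factorial : ℝ)⁻¹ := by
    rw [Nat.factorial_succ]
    push_cast
    field_simp
  rw [coeff_derivative, coeff_egf, coeff_egf, ← hn, mul_smul, Nat.cast_smul_eq_nsmul, nsmul_eq_mul]
  push_cast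
  ring

lemma coeff_egf_pow_mul_egf_pow {u v : ℕ → A} (hu : u 0 = 0) (hv : v 0 = 0) {s δ : ℕ}
    (h : s ≤ δ) (n : ℕ) :
    coeff n (egf u ^ s * egf v ^ (δ - s)) =
      ∑ f ∈ Finset.Nat.antidiagonalTuple δ n with ∀ i, 1 ≤ f i,
        (∏ i, ((f i).factorial : ℝ))⁻¹ • ((∏ i : Fin s, u (f (Fin.castLE h i))) *
          ∏ j ∈ univ.filter fun j : Fin δ => s ≤ (j : ℕ), v (f j)) := by
  rw [coeff_pow_mul_pow_eq_sum_antidiagonalTuple (by simpa) (by simpa) h]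
  refine sum_congr rfl fun f _ => ?_
  simp only [coeff_egf, prod_smul]
  rw [smul_mul_smul_comm, prod_castLE_mul_prod_filter_le h fun i => ((f i).factorial : ℝ)⁻¹,
    prod_inv_distrib]

lemma coeff_smul_add_smul_pow (p q : ℝ) (U V : A⟦X⟧) (δ n : ℕ) :
    coeff n ((p • U + q • V) ^ δ) = ∑ s ∈ range (δ + 1),
      (δ.choose s : ℝ) • (p ^ s * q ^ (δ - s)) • coeff n (U ^ s * V ^ (δ - s)) := by
  rw [add_pow, map_sum]
  refine sum_congr rfl fun s _ => ?_
  rw [smul_pow, smul_pow, smul_mul_smul_comm, mul_comm, ← nsmul_eq_mul, map_nsmul,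
    Nat.cast_smul_eq_nsmul]
  rfl

end ExponentialGeneratingFunctions

section RootCluster

open PowerSeries DualNumber

/-- The degree-weight generating function `Φ(t) = ∑ φ(δ) t^δ / δ!` of the increasing tree family. -/
noncomputable def degreeSeries (φ : ℕ → ℝ) : ℝ⟦X⟧ := egf φ

variable {A : Type*} [CommRing A] [Algebra ℝ A]

/-- The root-cluster polynomial `∑ₖ r_{m,k} vᵏ` evaluated at an element `v = y` of a real
algebra. -/
noncomputable def clusterSum (r : ℕ → ℕ → ℝ) (y : A) (m : ℕ) : A :=
  ∑ k ∈ Icc 1 m, r m k • y ^ k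

lemma clusterSum_zero (r : ℕ → ℕ → ℝ) (y : A) : clusterSum r y 0 = 0 := by
  simp [clusterSum]

lemma clusterSum_succ (r : ℕ → ℕ → ℝ) (y : A) (n : ℕ) :
    clusterSum r y (n + 1) = y * ∑ j ∈ range (n + 1), r (n + 1) (j + 1) • y ^ j := by
  rw [clusterSum, ← Finset.Ico_add_one_right_eq_Icc, sum_Ico_eq_sum_range, mul_sum]
  simp [add_comm 1, pow_succ']

lemma C_eps_mul_map_algebraMap_injective :
    Function.Injective fun F : ℝ⟦X⟧ => C ε * PowerSeries.map (algebraMap ℝ ℝ[ε]) F := by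
  intro F G h
  ext n
  simpa [TrivSqZeroExt.algebraMap_eq_inl] using congrArg (fun H => (coeff n H).snd) h

/-- The exponential generating function of the first moments `∑ⱼ j r_{n,j}`. -/
noncomputable def momentSeries (r : ℕ → ℕ → ℝ) : ℝ⟦X⟧ :=
  egf fun n => ∑ j ∈ Icc 1 n, (j : ℝ) * r n j

namespace clusterRec

variable {p : ℝ} {φ : ℕ → ℝ} {r : ℕ → ℕ → ℝ} {b : ℕ → ℝ}

lemma eq_zero_of_lt (hrec : clusterRec p φ r b) {n k : ℕ} (hn : 1 ≤ n) (hk : n < k) :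
    r n k = 0 := by
  induction n using Nat.strong_induction_on generalizing k with
  | _ n ih =>
  rw [hrec.2 n k hn (by omega)]
  refine sum_eq_zero fun δ _ => sum_eq_zero fun ⟨s, hs⟩ _ => ?_
  refine mul_eq_zero_of_right _ (sum_eq_zero fun f hf => ?_)
  refine mul_eq_zero_of_right _ (sum_eq_zero fun g hg => ?_)
  rw [mem_filter, Finset.Nat.mem_antidiagonalTuple] at hf hg
  have hsδ : s ≤ δ := Nat.lt_succ_iff.1 (mem_range.1 hs)
  have hle : ∑ i, f (Fin.castLE hsδ i) ≤ n - 1 := by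
    rw [← hf.1, ← sum_castLE_add_sum_filter_le hsδ f]
    exact Nat.le_add_right _ _
  obtain ⟨i, -, hi⟩ : ∃ i ∈ univ, f (Fin.castLE hsδ i) < g i :=
    exists_lt_of_sum_lt (by rw [hg.1]; omega)
  have hfi : f (Fin.castLE hsδ i) ≤ n - 1 :=
    (single_le_sum (f := fun i => f (Fin.castLE hsδ i)) (fun _ _ => Nat.zero_le _)
      (mem_univ i)).trans hle
  have hzero : ∏ i, r (f (Fin.castLE hsδ i)) (g i) = 0 :=
    prod_eq_zero (mem_univ i) (ih _ (by omega) (hf.2 _) hi)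
  rw [hzero, mul_zero, zero_mul]

lemma clusterSum_one (hrec : clusterRec p φ r b) (m : ℕ) :
    clusterSum r (1 : A) m = algebraMap ℝ A (b m) := by
  simp [clusterSum, hrec.1, Algebra.algebraMap_eq_smul_one]

lemma sum_range_sum_antidiagonalTuple_smul (hrec : clusterRec p φ r b) (y : A) {s n : ℕ}
    {f : Fin s → ℕ} (hf : ∀ i, 1 ≤ f i) (hsum : ∑ i, f i ≤ n) :
    ∑ j ∈ range (n + 1),
      (∑ g ∈ Finset.Nat.antidiagonalTuple s j with ∀ i, 1 ≤ g i, ∏ i, r (f i) (g i)) • y ^ j =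
    ∏ i, clusterSum r y (f i) := by
  simp only [clusterSum]
  rw [← sum_range_sum_antidiagonalTuple_prod hsum (fun i k => r (f i) k • y ^ k)
    fun i k hk => by rw [hrec.eq_zero_of_lt (hf i) hk, zero_smul]]
  refine sum_congr rfl fun j _ => ?_
  rw [sum_smul]
  refine sum_congr rfl fun g hg => ?_
  rw [prod_smul, prod_pow_eq_pow_sum, Finset.Nat.mem_antidiagonalTuple.1 (mem_filter.1 hg).1]

lemma sum_range_smul_eq_coeff (hrec : clusterRec p φ r b) (y : A) {s δ : ℕ} (h : s ≤ δ) (n : ℕ) :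
    ∑ j ∈ range (n + 1),
      (∑ f ∈ Finset.Nat.antidiagonalTuple δ n with ∀ i, 1 ≤ f i,
        ((n.factorial : ℝ) / ∏ i, ((f i).factorial : ℝ)) *
          ∑ g ∈ Finset.Nat.antidiagonalTuple s j with ∀ i, 1 ≤ g i,
            p ^ s * (1 - p) ^ (δ - s) * (∏ i : Fin s, r (f (Fin.castLE h i)) (g i)) *
              ∏ j ∈ univ.filter fun j : Fin δ => s ≤ (j : ℕ), b (f j)) • y ^ j =
    (n.factorial : ℝ) • (p ^ s * (1 - p) ^ (δ - s)) •
      coeff n (egf (clusterSum r y) ^ s * egf (clusterSum r (1 : A)) ^ (δ - s)) := by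
  rw [coeff_egf_pow_mul_egf_pow (clusterSum_zero r y) (clusterSum_zero r 1) h]
  simp only [sum_smul, smul_sum]
  rw [sum_comm]
  refine sum_congr rfl fun f hf => ?_
  rw [mem_filter, Finset.Nat.mem_antidiagonalTuple] at hf
  have hsum : ∑ i, f (Fin.castLE h i) ≤ n := by
    rw [← hf.1, ← sum_castLE_add_sum_filter_le h f]
    exact Nat.le_add_right _ _
  simp only [hrec.clusterSum_one, ← map_prod]
  rw [← hrec.sum_range_sum_antidiagonalTuple_smul y (fun i => hf.2 _) hsum,
    mul_comm _ (algebraMap _ _ _), ← Algebra.smul_def]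
  simp only [← mul_sum, ← sum_mul, smul_sum, smul_smul]
  refine sum_congr rfl fun j _ => ?_
  congr 1
  ring

lemma sum_range_smul_pow (hrec : clusterRec p φ r b) (y : A) (n : ℕ) :
    ∑ j ∈ range (n + 1), r (n + 1) (j + 1) • y ^ j =
      (n.factorial : ℝ) • coeff n ((degreeSeries φ).subst
        (p • egf (clusterSum r y) + (1 - p) • egf (clusterSum r (1 : A)))) := by
  rw [coeff_subst_eq_sum_range (by simp [clusterSum_zero]), smul_sum,
    sum_congr rfl fun j _ => by rw [hrec.2 _ _ n.succ_pos j.succ_pos, sum_smul], sum_comm]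
  refine sum_congr rfl fun δ _ => ?_
  simp only [sum_smul]
  rw [sum_comm, coeff_smul_add_smul_pow, ← sum_attach (range (δ + 1)), smul_sum, smul_sum]
  refine sum_congr rfl fun s _ => ?_
  have hs : s.1 ≤ δ := Nat.lt_succ_iff.1 (mem_range.1 s.2)
  have hcoeff : coeff δ (degreeSeries φ) = φ δ / δ.factorial := by
    rw [degreeSeries, coeff_egf, smul_eq_mul, inv_mul_eq_div]
  simp only [Nat.succ_sub_one]
  rw [sum_congr rfl fun j _ => mul_smul _ _ _, ← smul_sum, hrec.sum_range_smul_eq_coeff y hs,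
    hcoeff]
  module

theorem derivative_egf_clusterSum (hrec : clusterRec p φ r b) (y : A) :
    d⁄dX A (egf (clusterSum r y)) = C y * (degreeSeries φ).subst
      (p • egf (clusterSum r y) + (1 - p) • egf (clusterSum r (1 : A))) := by
  have hfact (n : ℕ) : (n.factorial : ℝ) ≠ 0 := by positivity
  ext n
  rw [derivative_egf, coeff_egf, clusterSum_succ, coeff_C_mul, hrec.sum_range_smul_pow,
    mul_smul_comm, inv_smul_smul₀ (hfact n)]

lemma constantCoeff_egf_total (hrec : clusterRec p φ r b) : constantCoeff (egf b) = 0 := by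
  simp [hrec.1]

theorem derivative_egf_total (hrec : clusterRec p φ r b) :
    d⁄dX ℝ (egf b) = (degreeSeries φ).subst (egf b) := by
  have hb : clusterSum r (1 : ℝ) = b := funext hrec.clusterSum_one
  have h := hrec.derivative_egf_clusterSum (1 : ℝ)
  rwa [hb, map_one, one_mul, ← add_smul, add_sub_cancel, one_smul] at h

lemma egf_clusterSum_one (hrec : clusterRec p φ r b) :
    egf (clusterSum r (1 : A)) = PowerSeries.map (algebraMap ℝ A) (egf b) := by
  ext n
  simp [hrec.clusterSum_one, Algebra.smul_def]

lemma egf_clusterSum_one_add_eps (hrec : clusterRec p φ r b) :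
    egf (clusterSum r (1 + ε : ℝ[ε])) = PowerSeries.map (algebraMap ℝ ℝ[ε]) (egf b) +
      C ε * PowerSeries.map (algebraMap ℝ ℝ[ε]) (momentSeries r) := by
  have hpow (k : ℕ) : (1 + ε : ℝ[ε]) ^ k = 1 + (k : ℝ) • ε := by
    ext <;> simp
  rw [← hrec.egf_clusterSum_one]
  ext n : 1
  simp only [map_add, coeff_egf, clusterSum, coeff_C_mul, coeff_map, momentSeries, hpow, smul_add,
    sum_add_distrib, one_pow]
  congr 1
  rw [← Algebra.commutes, ← Algebra.smul_def, smul_eq_mul, mul_smul, sum_smul]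
  congr 1
  exact sum_congr rfl fun k _ => by rw [smul_smul, mul_comm]

theorem derivative_momentSeries (hrec : clusterRec p φ r b) :
    d⁄dX ℝ (momentSeries r) = d⁄dX ℝ (egf b) +
      p • ((d⁄dX ℝ (degreeSeries φ)).subst (egf b) * momentSeries r) := by
  have hb := hrec.constantCoeff_egf_total
  have harg : p • egf (clusterSum r (1 + ε : ℝ[ε])) + (1 - p) • egf (clusterSum r 1) =
      PowerSeries.map (algebraMap ℝ ℝ[ε]) (egf b) +
        C ε * PowerSeries.map (algebraMap ℝ ℝ[ε]) (p • momentSeries r) := by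
    rw [hrec.egf_clusterSum_one_add_eps, hrec.egf_clusterSum_one, map_algebraMap_smul,
      mul_smul_comm]
    module
  have hε : (C ε * C ε : ℝ[ε]⟦X⟧) = 0 := by rw [← map_mul, eps_mul_eps, map_zero]
  have hmul (M : ℝ[ε]⟦X⟧) : C ε * M * (C ε * M) = 0 := by linear_combination M ^ 2 * hε
  have h := hrec.derivative_egf_clusterSum (1 + ε : ℝ[ε])
  rw [harg, subst_add_of_mul_self_eq_zero (by rw [constantCoeff_powerSeries_map, hb, map_zero])
      (by simp [momentSeries, constantCoeff_powerSeries_map]) (hmul _),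
    ← map_algebraMap_subst hb, ← map_algebraMap_subst hb, ← hrec.derivative_egf_total,
    hrec.egf_clusterSum_one_add_eps, map_add (d⁄dX _), Derivation.leibniz, derivative_C,
    derivative_powerSeries_map, derivative_powerSeries_map, smul_zero, add_zero, map_add C,
    map_one, smul_eq_mul] at h
  refine C_eps_mul_map_algebraMap_injective ?_
  simp only [map_add, ← mul_smul_comm, map_mul]
  linear_combination h + PowerSeries.map (algebraMap ℝ ℝ[ε])
    ((d⁄dX ℝ (degreeSeries φ)).subst (egf b)) *
      PowerSeries.map (algebraMap ℝ ℝ[ε]) (p • momentSeries r) * hε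

end clusterRec

end RootCluster

section BinomialSeries

open PowerSeries

section CommRing

variable {R : Type*} [CommRing R]

lemma coeff_one_sub_C_mul_X_mul_derivative (c : R) (U : R⟦X⟧) (n : ℕ) :
    coeff n ((1 - C c * X) * d⁄dX R U) = (n + 1) * coeff (n + 1) U - c * n * coeff n U := by
  rw [sub_mul, one_mul, map_sub, mul_assoc, coeff_C_mul, coeff_derivative]
  rcases n with _ | n
  · rw [coeff_zero_X_mul]
    ring
  · rw [coeff_succ_X_mul, coeff_derivative]
    push_cast
    ring

variable [BinomialRing R]

lemma succ_mul_ringChoose_succ (a : R) (n : ℕ) :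
    ((n : R) + 1) * Ring.choose a (n + 1) = (a - n) * Ring.choose a n := by
  have h := Ring.choose_smul_choose a n.le_succ
  rw [Nat.choose_succ_self_right, Nat.succ_sub le_rfl, Nat.sub_self, Ring.choose_one_right,
    nsmul_eq_mul] at h
  push_cast at h
  linear_combination h

lemma one_add_X_mul_derivative_binomialSeries (a : R) :
    (1 + X) * d⁄dX R (PowerSeries.binomialSeries R a) = C a * PowerSeries.binomialSeries R a := by
  have hX : (1 + X : R⟦X⟧) = 1 - C (-1) * X := by rw [map_neg, map_one]; ring
  ext n
  rw [hX, coeff_one_sub_C_mul_X_mul_derivative, coeff_C_mul, binomialSeries_coeff,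
    binomialSeries_coeff, smul_eq_mul, smul_eq_mul]
  linear_combination succ_mul_ringChoose_succ a n

lemma one_add_mul_subst_derivative_binomialSeries (a : R) {B : R⟦X⟧} (hB : constantCoeff B = 0) :
    (1 + B) * (d⁄dX R (PowerSeries.binomialSeries R a)).subst B =
      C a * (PowerSeries.binomialSeries R a).subst B := by
  have hs : HasSubst B := .of_constantCoeff_zero' hB
  have h := congrArg (subst B) (one_add_X_mul_derivative_binomialSeries a)
  rw [← smul_eq_C_mul, subst_smul hs, subst_mul hs, subst_add hs, subst_X hs] at h
  rw [← smul_eq_C_mul, ← h, ← coe_substAlgHom hs, map_one]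

end CommRing

section Field

variable {K : Type*} [Field K] [CharZero K] [BinomialRing K] {a : K} {B : K⟦X⟧}

lemma one_sub_C_mul_X_mul_derivative_eq_one_add (hB : constantCoeff B = 0)
    (hode : d⁄dX K B = (PowerSeries.binomialSeries K a).subst B) :
    (1 - C (a - 1) * X) * d⁄dX K B = 1 + B := by
  have hs : HasSubst B := .of_constantCoeff_zero' hB
  have hB' : constantCoeff (d⁄dX K B) = 1 := by
    rw [← coeff_zero_eq_constantCoeff_apply, hode, coeff_subst_eq_sum_range hB]
    simp
  have hne : constantCoeff (d⁄dX K B) ≠ 0 := by rw [hB']; exact one_ne_zero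
  have hinv : d⁄dX K B * (d⁄dX K B)⁻¹ = 1 := PowerSeries.mul_inv_cancel _ hne
  have hB'' : (1 + B) * d⁄dX K (d⁄dX K B) = C a * d⁄dX K B ^ 2 := by
    conv_lhs => rw [hode, derivative_subst hs]
    linear_combination d⁄dX K B * (one_add_mul_subst_derivative_binomialSeries a hB) -
      C a * d⁄dX K B * hode
  have hquot : (1 + B) * (d⁄dX K B)⁻¹ = 1 - C (a - 1) * X := by
    refine derivative.ext ?_ (by simp [hB, hB'])
    rw [Derivation.leibniz, derivative_inv', map_add (d⁄dX K), map_sub (d⁄dX K),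
      Derivation.leibniz, Derivation.map_one_eq_zero, derivative_C, derivative_X, map_sub C,
      map_one]
    simp only [smul_eq_mul]
    linear_combination (1 - C a * (d⁄dX K B * (d⁄dX K B)⁻¹ + 1)) * hinv -
      (d⁄dX K B)⁻¹ ^ 2 * hB''
  rw [← hquot, mul_assoc, mul_comm _ (d⁄dX K B), hinv, mul_one]

lemma one_sub_C_mul_X_mul_subst_derivative (hB : constantCoeff B = 0)
    (hode : d⁄dX K B = (PowerSeries.binomialSeries K a).subst B) :
    (1 - C (a - 1) * X) * (d⁄dX K (PowerSeries.binomialSeries K a)).subst B = C a := by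
  have hne : 1 + B ≠ 0 := fun h => by simpa [hB] using congrArg constantCoeff h
  refine mul_left_cancel₀ hne ?_
  linear_combination (1 - C (a - 1) * X) * one_add_mul_subst_derivative_binomialSeries a hB -
    C a * (1 - C (a - 1) * X) * hode + C a * one_sub_C_mul_X_mul_derivative_eq_one_add hB hode

lemma coeff_eq_of_one_sub_C_mul_X_mul_derivative {c : K} (hc : c ≠ 0) {U : K⟦X⟧}
    (hode : (1 - C c * X) * d⁄dX K U = C a * U) (n : ℕ) :
    coeff n U = constantCoeff U * (Ring.choose (-a / c) n * (-c) ^ n) := by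
  have hrec (n : ℕ) : ((n : K) + 1) * coeff (n + 1) U = (a + c * n) * coeff n U := by
    have h := congrArg (coeff n) hode
    rw [coeff_one_sub_C_mul_X_mul_derivative, coeff_C_mul] at h
    linear_combination h
  induction n with
  | zero => simp
  | succ n ih =>
    refine mul_left_cancel₀ (Nat.cast_add_one_ne_zero (R := K) n) ?_
    have hfactor : a + c * n = -c * (-a / c - n) := by field_simp; ring
    rw [hrec, ih, hfactor]
    linear_combination constantCoeff U * (-c) ^ n * c * succ_mul_ringChoose_succ (-a / c) n

end Field

lemma hasSum_ringChoose_mul_pow (a : ℝ) {x : ℝ} (hx : |x| < 1) :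
    HasSum (fun n => Ring.choose a n * x ^ n) ((1 + x) ^ a) := by
  have h := (Real.one_add_rpow_hasFPowerSeriesOnBall_zero (a := a)).hasSum (y := x) (by
    rw [← ENNReal.ofReal_one, Metric.eball_ofReal]
    simpa using hx)
  simpa only [binomialSeries_apply, List.ofFn_const, List.prod_replicate, zero_add,
    smul_eq_mul] using h

lemma hasSum_of_one_sub_C_mul_X_mul_derivative {a c x : ℝ} (hc : c ≠ 0) (hx : |c * x| < 1)
    {U : ℝ⟦X⟧} (hode : (1 - C c * X) * d⁄dX ℝ U = C a * U) :
    HasSum (fun n => coeff n U * x ^ n) (constantCoeff U * (1 - c * x) ^ (-a / c)) := by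
  have hterm : (fun n => coeff n U * x ^ n) =
      fun n => constantCoeff U * (Ring.choose (-a / c) n * (-(c * x)) ^ n) := by
    funext n
    rw [coeff_eq_of_one_sub_C_mul_X_mul_derivative hc hode, ← neg_mul, mul_pow]
    ring
  rw [hterm, sub_eq_add_neg]
  exact (hasSum_ringChoose_mul_pow (-a / c) (by rwa [abs_neg])).mul_left _

end BinomialSeries

section BinomialDegreeWeights

open PowerSeries

lemma degreeSeries_factorial_mul_ringChoose (a : ℝ) :
    degreeSeries (fun δ => δ.factorial * Ring.choose a δ) = PowerSeries.binomialSeries ℝ a := by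
  ext δ
  rw [degreeSeries, coeff_egf, binomialSeries_coeff, smul_eq_mul, smul_eq_mul, mul_one,
    inv_mul_cancel_left₀ (by positivity)]

namespace clusterRec

variable {p a : ℝ} {r : ℕ → ℕ → ℝ} {b : ℕ → ℝ}

lemma derivative_egf_total_eq_binomialSeries_subst
    (hrec : clusterRec p (fun δ => δ.factorial * Ring.choose a δ) r b) :
    d⁄dX ℝ (egf b) = (PowerSeries.binomialSeries ℝ a).subst (egf b) := by
  rw [hrec.derivative_egf_total, degreeSeries_factorial_mul_ringChoose]

lemma one_sub_C_mul_X_mul_derivative_one_add_egf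
    (hrec : clusterRec p (fun δ => δ.factorial * Ring.choose a δ) r b) :
    (1 - C (a - 1) * X) * d⁄dX ℝ (1 + egf b) = C 1 * (1 + egf b) := by
  rw [map_add, derivative_one, zero_add, map_one, one_mul]
  exact one_sub_C_mul_X_mul_derivative_eq_one_add hrec.constantCoeff_egf_total
    hrec.derivative_egf_total_eq_binomialSeries_subst

lemma one_sub_C_mul_X_mul_derivative_momentSeries
    (hrec : clusterRec p (fun δ => δ.factorial * Ring.choose a δ) r b) :
    (1 - C (a - 1) * X) * d⁄dX ℝ (momentSeries r) =
      1 + egf b + C (p * a) * momentSeries r := by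
  have htotal := hrec.derivative_egf_total_eq_binomialSeries_subst
  have hB := one_sub_C_mul_X_mul_derivative_eq_one_add hrec.constantCoeff_egf_total htotal
  have hΦ := one_sub_C_mul_X_mul_subst_derivative hrec.constantCoeff_egf_total htotal
  rw [hrec.derivative_momentSeries, degreeSeries_factorial_mul_ringChoose, smul_eq_C_mul,
    map_mul C]
  linear_combination hB + C p * momentSeries r * hΦ

lemma one_sub_C_mul_X_mul_derivative_momentSeries_add
    (hrec : clusterRec p (fun δ => δ.factorial * Ring.choose a δ) r b) :
    (1 - C (a - 1) * X) * d⁄dX ℝ (C (p * a - 1) * momentSeries r + (1 + egf b)) =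
      C (p * a) * (C (p * a - 1) * momentSeries r + (1 + egf b)) := by
  have hB := hrec.one_sub_C_mul_X_mul_derivative_one_add_egf
  have hM := hrec.one_sub_C_mul_X_mul_derivative_momentSeries
  have hC : C (p * a - 1) = C (p * a) - 1 := by rw [map_sub, map_one]
  rw [map_add (d⁄dX ℝ), Derivation.leibniz, derivative_C, smul_zero, add_zero, smul_eq_mul, hC]
  rw [map_one] at hB
  linear_combination hB + (C (p * a) - 1) * hM

end clusterRec

theorem stmt11_general {a p x : ℝ} {r : ℕ → ℕ → ℝ} {b : ℕ → ℝ} (ha : a ≠ 1) (hpa : p * a ≠ 1)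
    (hrec : clusterRec p (fun δ => δ.factorial * Ring.choose a δ) r b) (hx : |(a - 1) * x| < 1) :
    HasSum (fun n : ℕ => (∑ j ∈ Icc 1 n, (j : ℝ) * r n j) * x ^ n / n.factorial)
      (1 / (p * a - 1) *
        ((1 - (a - 1) * x) ^ (-(p * a) / (a - 1)) - (1 - (a - 1) * x) ^ (-(1 / (a - 1))))) := by
  have hc : a - 1 ≠ 0 := sub_ne_zero.2 ha
  have hpa' : p * a - 1 ≠ 0 := sub_ne_zero.2 hpa
  have hF := hasSum_of_one_sub_C_mul_X_mul_derivative hc hx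
    hrec.one_sub_C_mul_X_mul_derivative_one_add_egf
  have hU := hasSum_of_one_sub_C_mul_X_mul_derivative hc hx
    hrec.one_sub_C_mul_X_mul_derivative_momentSeries_add
  have hterm : (fun n : ℕ => (∑ j ∈ Icc 1 n, (j : ℝ) * r n j) * x ^ n / n.factorial) =
      fun n => 1 / (p * a - 1) *
        (coeff n (C (p * a - 1) * momentSeries r + (1 + egf b)) * x ^ n -
          coeff n (1 + egf b) * x ^ n) := by
    funext n
    rw [map_add, coeff_C_mul, momentSeries, coeff_egf, smul_eq_mul]
    field_simp
    ring
  have hF₀ : constantCoeff (1 + egf b) = 1 := by simp [hrec.constantCoeff_egf_total]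
  have hU₀ : constantCoeff (C (p * a - 1) * momentSeries r + (1 + egf b)) = 1 := by
    rw [map_add, hF₀]
    simp [momentSeries]
  rw [hF₀, one_mul, neg_div] at hF
  rw [hU₀, one_mul] at hU
  rw [hterm]
  exact (hU.sub hF).mul_left _

lemma ite_factorial_div_eq_factorial_mul_ringChoose (d δ : ℕ) :
    (if δ ≤ d then (d.factorial : ℝ) / (d - δ).factorial else 0) =
      δ.factorial * Ring.choose (d : ℝ) δ := by
  rw [Ring.choose_natCast]
  split_ifs with h
  · rw [Nat.cast_choose ℝ h]
    field_simp
  · rw [Nat.choose_eq_zero_of_lt (not_le.1 h), Nat.cast_zero, mul_zero]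

end BinomialDegreeWeights

/-- for random increasing `d`-ary trees with `p ≠ 1/d`, closed form for
the EGF of the first moments of the root-cluster weights. -/
theorem stmt11 (d : ℕ) (hd : 2 ≤ d) (p : ℝ) (hp0 : 0 < p) (hp1 : p < 1)
    (hpd : p ≠ 1 / (d : ℝ))
    (r : ℕ → ℕ → ℝ) (b : ℕ → ℝ)
    (hrec : clusterRec p
      (fun δ => if δ ≤ d then ((d.factorial : ℝ) / ((d - δ).factorial : ℝ)) else 0) r b) :
    ∀ x : ℝ, |x| < 1 / ((d : ℝ) - 1) →
      ∑' n : ℕ, (∑ j ∈ Finset.Icc 1 n, (j : ℝ) * r n j) * x ^ n / (n.factorial : ℝ)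
        = (1 / (p * d - 1)) *
            ((1 - ((d : ℝ) - 1) * x) ^ (-(p * d) / ((d : ℝ) - 1))
              - (1 - ((d : ℝ) - 1) * x) ^ (-(1 / ((d : ℝ) - 1)))) := by
  intro x hx
  have hd1 : (0 : ℝ) < d - 1 := sub_pos.2 (by exact_mod_cast hd)
  have hpd' : p * d ≠ 1 := fun h => hpd (eq_div_of_mul_eq (by positivity) h)
  have hx' : |((d : ℝ) - 1) * x| < 1 := by
    rwa [abs_mul, abs_of_pos hd1, ← lt_div_iff₀' hd1]
  simp only [ite_factorial_div_eq_factorial_mul_ringChoose] at hrec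
  exact (stmt11_general (by linarith) hpd' hrec hx').tsum_eq
end

section
/- Let 1/2 < p < 1 and let D_k denote the sequence defined by the Bell-polynomial recursion with d=2, i.e. D_1 = 1/(2p-1) and for k ≥ 2, (k-1)(2p-1)·D_k = p^2·2·B_{k,2}(D_1,…,D_{k-1}) = p^2·Σ_{i=1}^{k-1} C(k,i)·D_i·D_{k-i}. Then for every integer k ≥ 1, D_k = k!·p^{2(k-1)}/(2p-1)^{2k-1}. -/
/-!
Dividing by `k!` turns the binomial convolution into the Cauchy convolution of `E k = D k / k!`, and
for a geometric sequence `E k = (c / q) ^ (k - 1) * E 1 ^ k` all `k - 1` summands `E i * E (k - i)`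
coincide. Their number cancels the factor `k - 1` on the left-hand side of the recursion, which
therefore reproduces the next term of the geometric sequence. Multiplied by `k! * q ^ (k - 1)`, the
argument is free of division and needs only that positive integers can be cancelled.
-/

open Finset Filter Asymptotics

theorem sum_Icc_one_eq_sum_antidiagonal {M : Type*} [AddCommMonoid M] (f : ℕ → ℕ → M) (n : ℕ) :
    ∑ i ∈ Icc 1 (n + 1), f i (n + 2 - i) = ∑ ij ∈ antidiagonal n, f (ij.1 + 1) (ij.2 + 1) := by
  rw [Nat.sum_antidiagonal_eq_sum_range_succ (fun i j ↦ f (i + 1) (j + 1)),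
    ← Ico_add_one_right_eq_Icc, sum_Ico_eq_sum_range]
  refine sum_congr rfl fun i hi ↦ ?_
  have hi : i ≤ n := Nat.lt_succ_iff.mp (mem_range.mp hi)
  rw [add_comm 1 i, show n + 2 - (i + 1) = n - i + 1 by lia]

section CommSemiring

variable {R : Type*} [CommSemiring R] {c q a : R}

theorem pow_add_mul_choose_mul_mul {i j : ℕ} {x y : R}
    (hx : q ^ i * x = (i + 1).factorial * c ^ i * a ^ (i + 1))
    (hy : q ^ j * y = (j + 1).factorial * c ^ j * a ^ (j + 1)) :
    q ^ (i + j) * ((i + j + 2).choose (i + 1) * x * y) =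
      (i + j + 2).factorial * c ^ (i + j) * a ^ (i + j + 2) := by
  have hchoose : ((i + j + 2).factorial : R) =
      (i + j + 2).choose (i + 1) * (i + 1).factorial * (j + 1).factorial := by
    have h := Nat.choose_mul_factorial_mul_factorial (show i + 1 ≤ i + j + 2 by lia)
    rw [show i + j + 2 - (i + 1) = j + 1 by lia] at h
    simp only [← Nat.cast_mul, h]
  calc q ^ (i + j) * ((i + j + 2).choose (i + 1) * x * y)
      = (i + j + 2).choose (i + 1) * (q ^ i * x) * (q ^ j * y) := by ring
    _ = (i + j + 2).factorial * c ^ (i + j) * a ^ (i + j + 2) := by rw [hx, hy, hchoose]; ring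

theorem pow_mul_sum_antidiagonal_choose {D : ℕ → R} {n : ℕ}
    (hD : ∀ m ≤ n, q ^ m * D (m + 1) = (m + 1).factorial * c ^ m * a ^ (m + 1)) :
    q ^ n * ∑ ij ∈ antidiagonal n,
        ((n + 2).choose (ij.1 + 1) : R) * D (ij.1 + 1) * D (ij.2 + 1) =
      (n + 1) • ((n + 2).factorial * c ^ n * a ^ (n + 2)) := by
  rw [mul_sum, ← Nat.card_antidiagonal n]
  refine sum_eq_card_nsmul fun ij hij ↦ ?_
  obtain ⟨i, j⟩ := ij
  obtain rfl : i + j = n := mem_antidiagonal.mp hij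
  exact pow_add_mul_choose_mul_mul (hD i (by lia)) (hD j (by lia))

theorem pow_mul_eq_factorial_mul_of_binomial_recursion [IsAddTorsionFree R] {D : ℕ → R}
    (hD : ∀ n : ℕ, (n + 1 : R) * q * D (n + 2) =
      c * ∑ ij ∈ antidiagonal n, ((n + 2).choose (ij.1 + 1) : R) * D (ij.1 + 1) * D (ij.2 + 1))
    (n : ℕ) :
    q ^ n * D (n + 1) = (n + 1).factorial * c ^ n * D 1 ^ (n + 1) := by
  induction n using Nat.strong_induction_on with
  | _ n ih =>
    cases n with
    | zero => simp
    | succ n =>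
      have hsum := pow_mul_sum_antidiagonal_choose fun m hm ↦ ih m (Nat.lt_succ_of_le hm)
      refine nsmul_right_injective n.succ_ne_zero ?_
      calc (n + 1) • (q ^ (n + 1) * D (n + 2))
          = q ^ n * ((n + 1 : R) * q * D (n + 2)) := by rw [nsmul_eq_mul]; push_cast; ring
        _ = c * (q ^ n * ∑ ij ∈ antidiagonal n,
              ((n + 2).choose (ij.1 + 1) : R) * D (ij.1 + 1) * D (ij.2 + 1)) := by
            rw [hD, mul_left_comm]
        _ = (n + 1) • ((n + 2).factorial * c ^ (n + 1) * D 1 ^ (n + 2)) := by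
            rw [hsum, mul_smul_comm]; ring

end CommSemiring

theorem stmt14_general {K : Type*} [Field K] [CharZero K] {c q : K} (hq : q ≠ 0) {D : ℕ → K}
    (hD1 : D 1 = 1 / q)
    (hDk : ∀ k : ℕ, 2 ≤ k →
      ((k : K) - 1) * q * D k = c * ∑ i ∈ Icc 1 (k - 1), (k.choose i : K) * D i * D (k - i))
    {k : ℕ} (hk : 1 ≤ k) :
    D k = k.factorial * c ^ (k - 1) / q ^ (2 * k - 1) := by
  have hrec (n : ℕ) : (n + 1 : K) * q * D (n + 2) = c * ∑ ij ∈ antidiagonal n,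
      ((n + 2).choose (ij.1 + 1) : K) * D (ij.1 + 1) * D (ij.2 + 1) := by
    rw [← sum_Icc_one_eq_sum_antidiagonal fun i j ↦ ((n + 2).choose i : K) * D i * D j]
    refine .trans ?_ (hDk (n + 2) (by lia))
    push_cast
    ring
  obtain ⟨n, rfl⟩ := Nat.exists_eq_add_of_le' hk
  have hclosed := pow_mul_eq_factorial_mul_of_binomial_recursion hrec n
  rw [hD1, one_div, inv_pow, ← div_eq_mul_inv, eq_div_iff (pow_ne_zero _ hq)] at hclosed
  rw [Nat.add_sub_cancel, eq_div_iff (pow_ne_zero _ hq), ← hclosed,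
    show 2 * (n + 1) - 1 = n + (n + 1) by lia, pow_add]
  ring

/-- closed form for the Bell-polynomial recursion coefficients when `d = 2`:
`D_k = k! p^{2(k-1)} / (2p-1)^{2k-1}`. -/
theorem stmt14 (p : ℝ) (hp0 : 1 / 2 < p) (hp1 : p < 1)
    (D : ℕ → ℝ) (hD1 : D 1 = 1 / (2 * p - 1))
    (hDk : ∀ k : ℕ, 2 ≤ k →
      ((k : ℝ) - 1) * (2 * p - 1) * D k
        = p ^ 2 * ∑ i ∈ Finset.Icc 1 (k - 1), (k.choose i : ℝ) * D i * D (k - i)) :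
    ∀ k : ℕ, 1 ≤ k →
      D k = (k.factorial : ℝ) * p ^ (2 * (k - 1)) / (2 * p - 1) ^ (2 * k - 1) := by
  intro k hk
  simpa only [pow_mul] using stmt14_general (by linarith) hD1 hDk hk
end
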